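/- (Factorization formula for supersymmetric Schur polynomials.) Let n, p ≥ 1 and let α, β be partitions with α_1 ≤ n and l(β) ≤ p. Let λ be the partition with λ_l = n + β_l for 1 ≤ l ≤ p and λ_{p+l} = α_l for l ≥ 1. Then in ℤ[x_1,…,x_n,y_1,…,y_p]: s_λ(B−A) = (−1)^{|α|} · ∏_{a=1}^{n} ∏_{b=1}^{p} (y_b − x_a) · s_{α~}(x_1,…,x_n) · s_β(y_1,…,y_p), where s_λ(B−A) := det[ c_{(λ~)_k − k + l} ]_{1≤k,l≤λ_1} and c_d := ∑_{a=0}^{d} (−1)^a h_a(x_1,…,x_n) e_{d−a}(y_1,…,y_p) (with c_0 = 1 and c_d = 0 for d < 0). -/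

import Mathlib

/-!
STATEMENT 3 (factorization formula for supersymmetric Schur polynomials):
for partitions `α` (with `α_1 ≤ n`) and `β` (with `l(β) ≤ p`), and
`λ = (n^p + β, α)`, one has, in `ℤ[x_1,…,x_n,y_1,…,y_p]`,
`s_λ(B−A) = (−1)^{|α|} · ∏_{a,b} (y_b − x_a) · s_{α~}(x) · s_β(y)`.
Here `s_λ(B−A) = det[ c_{(λ~)_k − k + l} ]_{1≤k,l≤λ_1}` with
`c_d = ∑_{a=0}^d (−1)^a h_a(x) e_{d−a}(y)`.  Partitions are encoded 0-based;
the Schur polynomials are characterized by the bialternant formula.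
-/

open Finset MvPolynomial

/-- The conjugate partition, 0-based: `conjP lam m = (λ~)_{m+1} = #{k : λ_k ≥ m+1}`. -/
noncomputable def conjP (lam : ℕ → ℕ) (m : ℕ) : ℕ := Nat.card {k : ℕ // m + 1 ≤ lam k}

/-- The complete homogeneous symmetric polynomial `h_a(x_1,…,x_n)` in the x-variables. -/
noncomputable def hsymX (n p a : ℕ) : MvPolynomial (Fin n ⊕ Fin p) ℤ :=
  ∑ f ∈ Finset.Nat.antidiagonalTuple n a, ∏ k, X (Sum.inl k) ^ f k

/-- The elementary symmetric polynomial `e_b(y_1,…,y_p)` in the y-variables. -/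
noncomputable def esymY (n p b : ℕ) : MvPolynomial (Fin n ⊕ Fin p) ℤ :=
  ∑ t ∈ Finset.powersetCard b (Finset.univ : Finset (Fin p)), ∏ i ∈ t, X (Sum.inr i)

/-- `c_d = ∑_{a=0}^{d} (−1)^a h_a(x) e_{d−a}(y)`, the Chern class of `B^p − A^n`. -/
noncomputable def cpoly (n p d : ℕ) : MvPolynomial (Fin n ⊕ Fin p) ℤ :=
  ∑ a ∈ Finset.range (d + 1), (-1) ^ a * hsymX n p a * esymY n p (d - a)

/-- `c_d` for integer `d`, with `c_d = 0` for `d < 0`. -/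
noncomputable def cInt (n p : ℕ) (d : ℤ) : MvPolynomial (Fin n ⊕ Fin p) ℤ :=
  if 0 ≤ d then cpoly n p d.toNat else 0

/-- The supersymmetric Schur polynomial
`s_λ(B−A) = det[ c_{(λ~)_k − k + l} ]_{1≤k,l≤λ_1}` (indices written 0-based). -/
noncomputable def superSchur (n p : ℕ) (lam : ℕ → ℕ) : MvPolynomial (Fin n ⊕ Fin p) ℤ :=
  (Matrix.of fun k l : Fin (lam 0) =>
    cInt n p ((conjP lam (k : ℕ) : ℤ) - (k : ℕ) + (l : ℕ))).det

/-!
Let `c(t) = ∏ (1 + y_b t) / ∏ (1 + x_a t)`. Multiplying the Jacobi–Trudi matrix of `c` on the right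
by coefficients of `∏ (1 + x_a t)` replaces `c(t)` by `∏ (1 + y_b t)`, whose coefficients vanish in
degrees above `p`. Since the first `n` parts of the conjugate of `λ` are at least `p`, this splits
the determinant into an `n × n` Jacobi–Trudi determinant of `c` and the dual Jacobi–Trudi
determinant of `β` in the `y_b`.

In the first factor, multiply instead by the coefficients of the products `∏_{b ≠ a} (1 + x_b t)`,
one column for each `a`. The entries become coefficients of `∏ (1 + y_b t) / (1 + x_a t)` in degrees
at least `p`, that is, `(-x_a)^d ∏_b (y_b - x_a)`, and the determinant is an alternant in the `x_a`.

The second factor is evaluated by complementary minors: the rows of powers of `-y_a` annihilate the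
Toeplitz matrix of `∏ (1 + y_b t)`, so complementary maximal minors of the two matrices agree up to
sign and a common factor.
-/

section IntCoeff

variable {R : Type*} [CommRing R]

/-- The coefficient of `t ^ d` in a power series for an integer `d`, zero when `d < 0`, so that
Jacobi–Trudi matrices need no truncated subtraction. -/
noncomputable def intCoeff (f : PowerSeries R) (d : ℤ) : R :=
  if 0 ≤ d then PowerSeries.coeff d.toNat f else 0

lemma intCoeff_natCast (f : PowerSeries R) (d : ℕ) : intCoeff f d = PowerSeries.coeff d f := by
  simp [intCoeff]

lemma intCoeff_of_neg (f : PowerSeries R) {d : ℤ} (hd : d < 0) : intCoeff f d = 0 :=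
  if_neg hd.not_ge

lemma sum_intCoeff_mul_intCoeff (f g : PowerSeries R) {N : ℕ} {d e : ℤ} (heN : e < N)
    (h : ∀ l < 0, intCoeff f (d + l) * intCoeff g (e - l) = 0) :
    ∑ l : Fin N, intCoeff f (d + (l : ℕ)) * intCoeff g (e - (l : ℕ))
      = intCoeff (f * g) (d + e) := by
  have nonneg_of_ne_zero {l : ℤ} (hl : intCoeff f (d + l) * intCoeff g (e - l) ≠ 0) :
      0 ≤ d + l ∧ 0 ≤ e - l := by
    constructor <;> by_contra! hneg <;> simp [intCoeff_of_neg _ hneg] at hl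
  obtain hde | hde := lt_or_ge (d + e) 0
  · rw [intCoeff_of_neg _ hde]
    refine sum_eq_zero fun l _ ↦ ?_
    by_contra hl
    have := nonneg_of_ne_zero hl
    lia
  obtain ⟨D, hD⟩ := Int.eq_ofNat_of_zero_le hde
  rw [hD, intCoeff_natCast, PowerSeries.coeff_mul]
  refine sum_bij_ne_zero (fun l _ _ ↦ ((d + (l : ℕ)).toNat, (e - (l : ℕ)).toNat)) ?_ ?_ ?_ ?_
  · intro l _ hl
    have := nonneg_of_ne_zero hl
    rw [HasAntidiagonal.mem_antidiagonal]
    lia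
  · intro l _ hl l' _ hl' heq
    have := nonneg_of_ne_zero hl
    have := nonneg_of_ne_zero hl'
    rw [Prod.mk.injEq] at heq
    exact Fin.ext (by lia)
  · rintro ⟨i, j⟩ hij hne
    rw [HasAntidiagonal.mem_antidiagonal] at hij
    have hi : d + ((i : ℤ) - d) = i := by ring
    have hj : e - ((i : ℤ) - d) = j := by lia
    have hl : 0 ≤ (i : ℤ) - d := by
      by_contra! hneg
      have := h _ hneg
      rw [hi, hj, intCoeff_natCast, intCoeff_natCast] at this
      exact hne this
    obtain ⟨l, hl⟩ := Int.eq_ofNat_of_zero_le hl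
    rw [hl] at hi hj
    refine ⟨⟨l, by lia⟩, mem_univ _, ?_, ?_⟩
    · rwa [hi, hj, intCoeff_natCast, intCoeff_natCast]
    · simp [hi, hj]
  · intro l _ hl
    obtain ⟨hf, hg⟩ := nonneg_of_ne_zero hl
    simp only [intCoeff, if_pos hf, if_pos hg]

lemma det_of_intCoeff_sub (f : PowerSeries R) (N : ℕ) :
    (Matrix.of fun k l : Fin N ↦ intCoeff f ((l : ℕ) - (k : ℕ))).det
      = PowerSeries.constantCoeff f ^ N := by
  rw [Matrix.det_of_isUpperTriangular]
  · simp [intCoeff]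
  · intro k l hlk
    have : (l : ℕ) < k := hlk
    exact intCoeff_of_neg _ (by lia)

end IntCoeff

section GeneratingSeries

variable {R ι : Type*} [CommRing R]

/-- The generating series `∏_{b ∈ s} (1 + y_b t)` of the elementary symmetric polynomials in the
variables indexed by `s`. -/
noncomputable def elemSeries (y : ι → R) (s : Finset ι) : PowerSeries R :=
  ∏ b ∈ s, (1 + PowerSeries.C (y b) * PowerSeries.X)

/-- The geometric series `1 / (1 - z t)`. -/
noncomputable def geomSeries (z : R) : PowerSeries R := PowerSeries.mk (z ^ ·)

lemma coeff_elemSeries (y : ι → R) (s : Finset ι) (d : ℕ) :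
    PowerSeries.coeff d (elemSeries y s) = ∑ t ∈ powersetCard d s, ∏ i ∈ t, y i := by
  classical
  rw [elemSeries, prod_one_add, map_sum, powersetCard_eq_filter, sum_filter]
  refine sum_congr rfl fun t _ ↦ ?_
  rw [prod_mul_distrib, prod_const, ← map_prod, PowerSeries.coeff_C_mul, PowerSeries.coeff_X_pow,
    mul_ite, mul_one, mul_zero]
  exact if_congr eq_comm rfl rfl

lemma intCoeff_elemSeries_of_card_lt (y : ι → R) {s : Finset ι} {d : ℤ} (hd : #s < d) :
    intCoeff (elemSeries y s) d = 0 := by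
  lift d to ℕ using by lia
  rw [intCoeff_natCast, coeff_elemSeries, powersetCard_eq_empty.2 (by lia), sum_empty]

lemma sum_intCoeff_mul_intCoeff_elemSeries (f : PowerSeries R) (y : ι → R) {s : Finset ι} {N : ℕ}
    {e : ℤ} (hs : #s ≤ e) (heN : e < N) (d : ℤ) :
    ∑ l : Fin N, intCoeff f (d + (l : ℕ)) * intCoeff (elemSeries y s) (e - (l : ℕ))
      = intCoeff (f * elemSeries y s) (d + e) :=
  sum_intCoeff_mul_intCoeff f _ heN fun l hl ↦ by
    rw [intCoeff_elemSeries_of_card_lt _ (by lia), mul_zero]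

lemma constantCoeff_elemSeries (y : ι → R) (s : Finset ι) :
    PowerSeries.constantCoeff (elemSeries y s) = 1 := by
  simp [elemSeries, map_prod]

lemma one_add_C_mul_X_mul_geomSeries_neg (z : R) :
    (1 + PowerSeries.C z * PowerSeries.X) * geomSeries (-z) = 1 := by
  ext d
  rw [add_mul, one_mul, mul_assoc]
  cases d with
  | zero => simp [geomSeries]
  | succ d =>
    simp [geomSeries, PowerSeries.coeff_succ_X_mul, PowerSeries.coeff_one, pow_succ, mul_comm]

lemma elemSeries_mul_prod_geomSeries_neg (x : ι → R) (s : Finset ι) :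
    elemSeries x s * ∏ a ∈ s, geomSeries (-x a) = 1 := by
  rw [elemSeries, ← prod_mul_distrib]
  exact prod_eq_one fun a _ ↦ one_add_C_mul_X_mul_geomSeries_neg (x a)

lemma elemSeries_erase [DecidableEq ι] (x : ι → R) {s : Finset ι} {a : ι} (ha : a ∈ s) :
    elemSeries x (s.erase a) = elemSeries x s * geomSeries (-x a) := by
  rw [elemSeries, elemSeries, ← mul_prod_erase s _ ha, mul_right_comm,
    one_add_C_mul_X_mul_geomSeries_neg, one_mul]

lemma coeff_elemSeries_mul_geomSeries (y : ι → R) (s : Finset ι) (z : R) (N : ℕ) :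
    PowerSeries.coeff (#s + N) (elemSeries y s * geomSeries z) = z ^ N * ∏ b ∈ s, (y b + z) := by
  classical
  induction s using Finset.induction_on generalizing N with
  | empty => simp [elemSeries, geomSeries]
  | insert b s hb ih =>
    have hstep : elemSeries y (insert b s) * geomSeries z
        = elemSeries y s * geomSeries z
          + PowerSeries.C (y b) * (PowerSeries.X * (elemSeries y s * geomSeries z)) := by
      rw [elemSeries, prod_insert hb, ← elemSeries]
      ring
    rw [hstep, card_insert_of_notMem hb, prod_insert hb, map_add, PowerSeries.coeff_C_mul,
      add_right_comm, PowerSeries.coeff_succ_X_mul, add_assoc, ih, ih]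
    ring

lemma coeff_prod_geomSeries {n : ℕ} (x : Fin n → R) (d : ℕ) :
    PowerSeries.coeff d (∏ k, geomSeries (x k))
      = ∑ f ∈ Finset.Nat.antidiagonalTuple n d, ∏ k, x k ^ f k := by
  rw [PowerSeries.coeff_prod]
  simp only [geomSeries, PowerSeries.coeff_mk]
  refine sum_nbij' (⇑) Finsupp.equivFunOnFinite.symm ?_ ?_ ?_ ?_ ?_ <;>
    simp [Finset.Nat.mem_antidiagonalTuple]

end GeneratingSeries

section Alternant

variable {R S : Type*} [CommRing R] [CommRing S] {n : ℕ}

/-- The alternant `det[x_a ^ (ν_b + n - b)]`, the numerator of the bialternant formula; the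
denominator is `alternant x 0`. -/
def alternant (x : Fin n → R) (ν : ℕ → ℕ) : R :=
  (Matrix.of fun a b : Fin n ↦ x a ^ (ν b + (n - 1 - (b : ℕ)))).det

lemma map_alternant (φ : R →+* S) (x : Fin n → R) (ν : ℕ → ℕ) :
    φ (alternant x ν) = alternant (φ ∘ x) ν := by
  rw [alternant, RingHom.map_det]
  congr 1
  ext a b
  simp

lemma alternant_zero (x : Fin n → R) :
    alternant x 0 = ∏ q : Fin n × Fin n with q.1 < q.2, (x q.1 - x q.2) := by
  have hvandermonde : (Matrix.of fun a b : Fin n ↦ x a ^ ((0 : ℕ → ℕ) b + (n - 1 - (b : ℕ))))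
      = Matrix.projVandermonde 1 x := by
    ext a b
    rw [Matrix.of_apply, Matrix.projVandermonde_apply, Pi.one_apply, one_pow, one_mul, Fin.val_rev,
      Pi.zero_apply, zero_add, add_comm, Nat.sub_sub]
  rw [alternant, hvandermonde, Matrix.det_projVandermonde, prod_filter, Fintype.prod_prod_type]
  refine prod_congr rfl fun i _ ↦ ?_
  rw [← prod_filter]
  exact prod_congr (by ext; simp) (by simp)

lemma alternant_zero_ne_zero [IsDomain R] {x : Fin n → R} (hx : Function.Injective x) :
    alternant x 0 ≠ 0 := by
  rw [alternant_zero, prod_ne_zero_iff]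
  intro q hq
  exact sub_ne_zero.2 (hx.ne (mem_filter.1 hq).2.ne)

lemma alternant_neg (x : Fin n → R) (ν : ℕ → ℕ) :
    alternant (-x) ν = (-1) ^ (∑ b : Fin n, (ν b + (n - 1 - (b : ℕ)))) * alternant x ν := by
  rw [alternant, alternant, ← prod_pow_eq_pow_sum, ← Matrix.det_mul_row]
  congr 1
  ext a b
  rw [Matrix.of_apply, Matrix.of_apply, Matrix.of_apply, Pi.neg_apply, neg_pow]

lemma mul_alternant_zero_of_neg {x : Fin n → R} {ν : ℕ → ℕ} {c d : R}
    (h : c * alternant (-x) 0 = d * alternant (-x) ν) :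
    c * alternant x 0 = (-1) ^ (∑ b : Fin n, ν b) * d * alternant x ν := by
  simp only [alternant_neg, Pi.zero_apply, zero_add, sum_add_distrib, pow_add] at h
  refine (isUnit_neg_one.pow (∑ b : Fin n, (n - 1 - (b : ℕ)))).mul_left_cancel ?_
  linear_combination h

end Alternant

section BlockDeterminants

variable {R N l m : Type*} [CommRing R] [Fintype N] [DecidableEq N] [Fintype l] [DecidableEq l]
  [Fintype m] [DecidableEq m]

-- Extend `W` by unit columns: its product with `M` is block lower triangular.
lemma det_mul_det_submatrix_of_mul_submatrix_eq_zero {M : Matrix N N R} {W : Matrix N m R}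
    (e : l ⊕ m ≃ N) (h : (M * W).submatrix (e ∘ Sum.inl) id = 0) :
    M.det * (W.submatrix (e ∘ Sum.inr) id).det
      = (M.submatrix (e ∘ Sum.inl) (e ∘ Sum.inl)).det
        * ((M * W).submatrix (e ∘ Sum.inr) id).det := by
  let V : Matrix N (l ⊕ m) R := .fromCols (Matrix.submatrix 1 id (e ∘ Sum.inl)) W
  have hV : V.submatrix e id = .fromBlocks 1 (W.submatrix (e ∘ Sum.inl) id) 0
      (W.submatrix (e ∘ Sum.inr) id) := by
    ext (i | i) (j | j) <;> simp [V, Matrix.one_apply]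
  have hmul : M.submatrix e e * V.submatrix e id
      = .fromBlocks (M.submatrix (e ∘ Sum.inl) (e ∘ Sum.inl)) 0
          (M.submatrix (e ∘ Sum.inr) (e ∘ Sum.inl)) ((M * W).submatrix (e ∘ Sum.inr) id) := by
    rw [Matrix.submatrix_mul_equiv, Matrix.mul_fromCols, ← h]
    ext (i | i) (j | j) <;> simp [Matrix.mul_apply, Matrix.one_apply]
  have hdet := congrArg Matrix.det hmul
  rwa [Matrix.det_mul, Matrix.det_submatrix_equiv_self, hV, Matrix.det_fromBlocks_zero₂₁,
    Matrix.det_fromBlocks_zero₁₂, Matrix.det_one, one_mul] at hdet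

-- Extend `A` by unit rows and `T` by unit columns: the product of the two square matrices is block
-- upper triangular because `A * T = 0`.
lemma sign_mul_det_mul_det_of_mul_eq_zero {A : Matrix l N R} {T : Matrix N m R} (hAT : A * T = 0)
    (e : m ⊕ l ≃ N) (τ : Equiv.Perm N) :
    (Equiv.Perm.sign τ : R) * (A.submatrix id (e ∘ Sum.inr)).det
        * (T.submatrix (τ ∘ e ∘ Sum.inl) id).det
      = (T.submatrix (e ∘ Sum.inl) id).det * (A.submatrix id (τ ∘ e ∘ Sum.inr)).det := by
  let Z : Matrix (m ⊕ l) N R := .fromRows (Matrix.submatrix 1 (e ∘ Sum.inl) id) A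
  let W : Matrix N (m ⊕ l) R := .fromCols T (Matrix.submatrix 1 id (τ ∘ e ∘ Sum.inr))
  have hmul : Z.submatrix id (e.trans τ) * W.submatrix (e.trans τ) id
      = .fromBlocks (T.submatrix (e ∘ Sum.inl) id) (Z * W).toBlocks₁₂ 0
          (A.submatrix id (τ ∘ e ∘ Sum.inr)) := by
    rw [Matrix.submatrix_mul_equiv, Matrix.submatrix_id_id, Matrix.fromRows_mul_fromCols, hAT,
      Matrix.toBlocks_fromBlocks₁₂]
    congr 1
    · ext i j; simp [Matrix.mul_apply, Matrix.one_apply]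
    · ext i j; simp [Matrix.mul_apply, Matrix.one_apply]
  have hZ : Z.submatrix id e = .fromBlocks 1 0 (A.submatrix id (e ∘ Sum.inl))
      (A.submatrix id (e ∘ Sum.inr)) := by
    ext (i | i) (j | j) <;> simp [Z, Matrix.one_apply]
  have hW : W.submatrix (e.trans τ) id = .fromBlocks (T.submatrix (τ ∘ e ∘ Sum.inl) id) 0
      (T.submatrix (τ ∘ e ∘ Sum.inr) id) 1 := by
    ext (i | i) (j | j) <;> simp [W, Matrix.one_apply]
  have hperm : (Z.submatrix id (e.trans τ)).det
      = Equiv.Perm.sign τ * (A.submatrix id (e ∘ Sum.inr)).det := by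
    have := Matrix.det_permute' ((e.trans τ).trans e.symm) (Z.submatrix id e)
    rw [Equiv.Perm.sign_trans_trans_symm, Matrix.submatrix_submatrix, hZ,
      Matrix.det_fromBlocks_zero₁₂, Matrix.det_one, one_mul] at this
    rw [← this]
    congr 2
    ext i
    simp
  have hdet := congrArg Matrix.det hmul
  rwa [Matrix.det_mul, hperm, hW, Matrix.det_fromBlocks_zero₁₂, Matrix.det_fromBlocks_zero₂₁,
    Matrix.det_one, mul_one] at hdet

end BlockDeterminants

section JacobiTrudi

variable {R ι κ : Type*} [CommRing R]

/-- The Jacobi–Trudi determinant `det[c_{μ_k - k + l}]` of size `N` attached to the coefficients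
`c_d` of a power series `f`. -/
noncomputable def jacobiTrudi (f : PowerSeries R) (μ : ℕ → ℕ) (N : ℕ) : R :=
  (Matrix.of fun k l : Fin N ↦ intCoeff f ((μ k : ℤ) - (k : ℕ) + (l : ℕ))).det

lemma jacobiTrudi_zero (f : PowerSeries R) (N : ℕ) :
    jacobiTrudi f 0 N = PowerSeries.constantCoeff f ^ N := by
  rw [jacobiTrudi, ← det_of_intCoeff_sub]
  simp only [Pi.zero_apply, Nat.cast_zero, zero_sub, neg_add_eq_sub]

lemma jacobiTrudi_add {f : PowerSeries R} {x : ι → R} {y : κ → R} {s : Finset ι} {t : Finset κ}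
    (hf : f * elemSeries x s = elemSeries y t) {μ : ℕ → ℕ} (hμ : ∀ k < #s, #t ≤ μ k) (m : ℕ) :
    jacobiTrudi f μ (#s + m)
      = jacobiTrudi f μ #s * jacobiTrudi (elemSeries y t) (fun j ↦ μ (#s + j)) m := by
  let M : Matrix (Fin (#s + m)) (Fin (#s + m)) R :=
    .of fun k l ↦ intCoeff f ((μ k : ℤ) - (k : ℕ) + (l : ℕ))
  let W : Matrix (Fin (#s + m)) (Fin m) R := .of fun l i ↦
    intCoeff (elemSeries x s) ((#s + i : ℕ) - (l : ℕ))
  have hMW (k : Fin (#s + m)) (i : Fin m) : (M * W) k i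
      = intCoeff (elemSeries y t) ((μ k : ℤ) - (k : ℕ) + (#s + i : ℕ)) := by
    have hi := i.isLt
    rw [← hf]
    exact sum_intCoeff_mul_intCoeff_elemSeries f x (by lia) (by push_cast; lia) _
  have hupper : (M * W).submatrix (finSumFinEquiv ∘ Sum.inl) id = 0 := by
    ext k i
    have hk := hμ k k.isLt
    refine (hMW (Fin.castAdd m k) i).trans (intCoeff_elemSeries_of_card_lt _ ?_)
    rw [Fin.val_castAdd]
    lia
  have hlower : (M * W).submatrix (finSumFinEquiv ∘ Sum.inr) id
      = .of fun j i ↦ intCoeff (elemSeries y t) ((μ (#s + j) : ℤ) - (j : ℕ) + (i : ℕ)) := by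
    ext j i
    refine (hMW (Fin.natAdd #s j) i).trans ?_
    rw [Matrix.of_apply, Fin.val_natAdd]
    congr 1
    lia
  have hW : (W.submatrix (finSumFinEquiv ∘ Sum.inr) id).det = 1 := by
    rw [← one_pow m, ← constantCoeff_elemSeries x s, ← det_of_intCoeff_sub]
    congr 1
    ext l i
    simp [W]
  have hblocks := det_mul_det_submatrix_of_mul_submatrix_eq_zero finSumFinEquiv hupper
  rw [hlower, hW, mul_one] at hblocks
  exact hblocks

end JacobiTrudi

section Factorization

variable {R κ : Type*} [CommRing R] {n : ℕ}

/-- The matrix whose columns list, from degree `n - 1` down to `0`, the coefficients of the products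
`∏_{b ≠ a} (1 + x_b t)`. -/
noncomputable def elemEraseMatrix (x : Fin n → R) : Matrix (Fin n) (Fin n) R :=
  .of fun l a ↦ intCoeff (elemSeries x (univ.erase a)) ((n : ℤ) - 1 - (l : ℕ))

lemma jacobiTrudi_mul_det_elemEraseMatrix (x : Fin n → R) (y : κ → R) {t : Finset κ}
    {f : PowerSeries R} (hf : f * elemSeries x univ = elemSeries y t) {μ ν : ℕ → ℕ}
    (hμ : ∀ k < n, μ k = #t + ν k) :
    jacobiTrudi f μ n * (elemEraseMatrix x).det
      = (∏ a, ∏ b ∈ t, (y b - x a)) * alternant (-x) ν := by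
  rw [jacobiTrudi, ← Matrix.det_mul, ← Matrix.det_transpose, alternant,
    ← Matrix.det_transpose (.of _), ← Matrix.det_mul_row, ← Matrix.det_transpose]
  congr 1
  ext k a
  have hk := k.isLt
  have hdegree : (μ k : ℤ) - (k : ℕ) + ((n : ℤ) - 1) = (#t + (ν k + (n - 1 - k)) : ℕ) := by
    rw [hμ k hk]
    lia
  have hcard : (#(univ.erase a) : ℤ) = n - 1 := by
    rw [card_erase_of_mem (mem_univ a), card_fin]
    lia
  simp only [Matrix.transpose_apply, Matrix.mul_apply, Matrix.of_apply, elemEraseMatrix]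
  rw [sum_intCoeff_mul_intCoeff_elemSeries _ _ hcard.le (by lia),
    elemSeries_erase _ (mem_univ a), ← mul_assoc, hf, hdegree, intCoeff_natCast,
    coeff_elemSeries_mul_geomSeries]
  simp only [Pi.neg_apply, sub_eq_add_neg, mul_comm]

lemma det_elemEraseMatrix (x : Fin n → R) : (elemEraseMatrix x).det = alternant (-x) 0 := by
  have hinv : (∏ a, geomSeries (-x a)) * elemSeries x univ = elemSeries x ∅ := by
    rw [mul_comm, elemSeries_mul_prod_geomSeries_neg, elemSeries, prod_empty]
  have hconst : PowerSeries.constantCoeff (∏ a, geomSeries (-x a)) = 1 := by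
    simp [geomSeries, map_prod]
  have h := jacobiTrudi_mul_det_elemEraseMatrix x x hinv (μ := 0) (ν := 0) (by simp)
  simpa [jacobiTrudi_zero, hconst] using h

lemma jacobiTrudi_mul_alternant_zero (x : Fin n → R) (y : κ → R) {t : Finset κ}
    {f : PowerSeries R} (hf : f * elemSeries x univ = elemSeries y t) {μ ν : ℕ → ℕ}
    (hμ : ∀ k < n, μ k = #t + ν k) :
    jacobiTrudi f μ n * alternant x 0
      = (-1) ^ (∑ k : Fin n, ν k) * (∏ a, ∏ b ∈ t, (y b - x a)) * alternant x ν :=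
  mul_alternant_zero_of_neg <| by
    rw [← det_elemEraseMatrix, jacobiTrudi_mul_det_elemEraseMatrix x y hf hμ]

end Factorization

section GrassmannianSign

lemma prod_Iio_ite_perm_lt {n : ℕ} (τ : Equiv.Perm (Fin n)) {i : Fin n}
    (hi : ∀ j, i < j → τ i < τ j) :
    ∏ j ∈ Iio i, (if τ j < τ i then 1 else -1 : ℤˣ) = (-1) ^ ((i : ℕ) - τ i) := by
  have hbelow : (Iio i).filter (fun j ↦ τ j < τ i) = (Iio (τ i)).map τ.symm.toEmbedding := by
    ext j
    simp only [mem_filter, mem_Iio, mem_map_equiv, Equiv.symm_symm, and_iff_right_iff_imp]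
    intro hj
    by_contra! hij
    obtain rfl | hij := hij.eq_or_lt
    · exact hj.false
    · exact (hi j hij).asymm hj
  have hcard := card_filter_add_card_filter_not (s := Iio i) (fun j ↦ τ j < τ i)
  rw [hbelow, card_map, Fin.card_Iio, Fin.card_Iio] at hcard
  rw [prod_ite, prod_const_one, one_mul, prod_const]
  congr 1
  lia

lemma sign_eq_pow_of_strictMono_blocks {m p : ℕ} (τ : Equiv.Perm (Fin (m + p)))
    (hm : StrictMono (τ ∘ Fin.castAdd p)) (hp : StrictMono (τ ∘ Fin.natAdd m)) :
    Equiv.Perm.sign τ = (-1) ^ ∑ k : Fin p, (m + (k : ℕ) - τ (Fin.natAdd m k)) := by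
  rw [Equiv.Perm.sign_eq_prod_prod_Iio, Fin.prod_univ_add, ← prod_pow_eq_pow_sum]
  have hfirst (i : Fin m) : ∏ j ∈ Iio (Fin.castAdd p i),
      (if τ j < τ (Fin.castAdd p i) then 1 else -1 : ℤˣ) = 1 := by
    refine prod_eq_one fun j hj ↦ if_pos ?_
    cases j using Fin.addCases with
    | left j => exact hm ((Fin.strictMono_castAdd p).lt_iff_lt.1 (mem_Iio.1 hj))
    | right j => simp only [mem_Iio, Fin.lt_def, Fin.val_natAdd, Fin.val_castAdd] at hj; lia
  simp only [hfirst, prod_const_one, one_mul]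
  refine prod_congr rfl fun k _ ↦ prod_Iio_ite_perm_lt τ fun j hj ↦ ?_
  cases j using Fin.addCases with
  | left j => simp only [Fin.lt_def, Fin.val_natAdd, Fin.val_castAdd] at hj; lia
  | right j => exact hp ((Fin.natAdd_lt_natAdd_iff m).1 hj)

lemma exists_perm_of_strictMono_blocks {m p : ℕ} {left : Fin m → Fin (m + p)}
    {right : Fin p → Fin (m + p)} (hleft : StrictMono left) (hright : StrictMono right)
    (hdisjoint : ∀ j k, left j ≠ right k) :
    ∃ τ : Equiv.Perm (Fin (m + p)),
      (∀ j, τ (Fin.castAdd p j) = left j) ∧ (∀ k, τ (Fin.natAdd m k) = right k) ∧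
      Equiv.Perm.sign τ = (-1) ^ ∑ k : Fin p, (m + (k : ℕ) - right k) := by
  have hinj : Function.Injective (Fin.append left right) :=
    Fin.append_injective_iff.2 ⟨hleft.injective, hright.injective, hdisjoint⟩
  let τ := Equiv.ofBijective _ (Finite.injective_iff_bijective.1 hinj)
  have hτleft : τ ∘ Fin.castAdd p = left := funext (Fin.append_left left right)
  have hτright : τ ∘ Fin.natAdd m = right := funext (Fin.append_right left right)
  refine ⟨τ, congrFun hτleft, congrFun hτright, ?_⟩
  rw [sign_eq_pow_of_strictMono_blocks τ (hτleft ▸ hleft) (hτright ▸ hright), ← hτright]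
  rfl

end GrassmannianSign

section Conjugate

lemma conjP_eq_of_lt_iff {lam : ℕ → ℕ} {m c : ℕ} (h : ∀ l, m < lam l ↔ l < c) :
    conjP lam m = c :=
  (Nat.subtype_card (range c) fun l ↦ mem_range.trans (h l).symm).trans (card_range c)

lemma lt_conjP_iff {lam : ℕ → ℕ} (hlam : Antitone lam) {K : ℕ} (hK : ∀ k, K ≤ k → lam k = 0)
    {m l : ℕ} : l < conjP lam m ↔ m < lam l := by
  have hex : ∃ k, lam k ≤ m := ⟨K, by simp [hK K le_rfl]⟩
  have hfind (l : ℕ) : m < lam l ↔ l < Nat.find hex := by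
    rw [Nat.lt_find_iff]
    exact ⟨fun h k hk ↦ (h.trans_le (hlam hk)).not_ge, fun h ↦ not_le.1 (h l le_rfl)⟩
  rw [conjP_eq_of_lt_iff hfind, hfind]

lemma antitone_conjP {lam : ℕ → ℕ} (hlam : Antitone lam) {K : ℕ} (hK : ∀ k, K ≤ k → lam k = 0) :
    Antitone (conjP lam) := by
  intro m m' hm
  refine le_of_forall_lt fun l hl ↦ ?_
  rw [lt_conjP_iff hlam hK] at hl ⊢
  lia

lemma conjP_eq_zero {lam : ℕ → ℕ} (hlam : Antitone lam) {m : ℕ} (hm : lam 0 ≤ m) :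
    conjP lam m = 0 :=
  conjP_eq_of_lt_iff fun l ↦ by
    have := hlam (Nat.zero_le l)
    lia

lemma conjP_le {lam : ℕ → ℕ} (hlam : Antitone lam) {K : ℕ} (hK : ∀ k, K ≤ k → lam k = 0) (m : ℕ) :
    conjP lam m ≤ K := by
  by_contra! h
  have := (lt_conjP_iff hlam hK).1 h
  simp [hK] at this

lemma sum_conjP {lam : ℕ → ℕ} (hlam : Antitone lam) {K : ℕ} (hK : ∀ k, K ≤ k → lam k = 0) {n : ℕ}
    (hn : lam 0 ≤ n) : ∑ m : Fin n, conjP lam m = ∑ l ∈ range K, lam l := by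
  have hrow (l : ℕ) : #((range n).filter (· < lam l)) = lam l := by
    have := hlam (Nat.zero_le l)
    have hfilter : (range n).filter (· < lam l) = range (lam l) := by
      ext m
      rw [mem_filter, mem_range, mem_range]
      lia
    rw [hfilter, card_range]
  have hcol (m : ℕ) : #((range K).filter (m < lam ·)) = conjP lam m := by
    have := conjP_le hlam hK m
    have hfilter : (range K).filter (m < lam ·) = range (conjP lam m) := by
      ext l
      rw [mem_filter, mem_range, mem_range, ← lt_conjP_iff hlam hK]
      lia
    rw [hfilter, card_range]
  rw [Fin.sum_univ_eq_sum_range (conjP lam), ← sum_congr rfl fun m _ ↦ hcol m,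
    ← sum_congr rfl fun l _ ↦ hrow l]
  exact sum_card_bipartiteAbove_eq_sum_card_bipartiteBelow fun m l ↦ m < lam l

/-- The partition `(n^p + β, α)` whose Young diagram consists of the `p × n` rectangle with `β`
attached to its right and `α` attached below. -/
def gluePartition (n p : ℕ) (α β : ℕ → ℕ) (l : ℕ) : ℕ := if l < p then n + β l else α (l - p)

lemma conjP_gluePartition_of_lt {n p : ℕ} {α β : ℕ → ℕ} (hα : Antitone α) {N : ℕ}
    (hN : ∀ k, N ≤ k → α k = 0) {m : ℕ} (hm : m < n) :
    conjP (gluePartition n p α β) m = p + conjP α m :=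
  conjP_eq_of_lt_iff fun l ↦ by
    have := lt_conjP_iff hα hN (m := m) (l := l - p)
    unfold gluePartition
    split_ifs <;> lia

lemma conjP_gluePartition_add {n p : ℕ} {α β : ℕ → ℕ} (hα : ∀ l, α l ≤ n) (hβ : Antitone β)
    (hp : ∀ k, p ≤ k → β k = 0) (m : ℕ) : conjP (gluePartition n p α β) (n + m) = conjP β m :=
  conjP_eq_of_lt_iff fun l ↦ by
    have := lt_conjP_iff hβ hp (m := m) (l := l)
    have := conjP_le hβ hp m
    have := hα (l - p)
    unfold gluePartition
    split_ifs <;> lia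

end Conjugate

section DualJacobiTrudi

-- The images of the two blocks are the complementary sets of vertical and horizontal steps of the
-- path bounding the Young diagram of `β`.
lemma exists_perm_of_conjP {β : ℕ → ℕ} (hβ : Antitone β) {m p : ℕ} (hp : ∀ k, p ≤ k → β k = 0)
    (hm : β 0 ≤ m) :
    ∃ τ : Equiv.Perm (Fin (m + p)),
      (∀ j : Fin m, (τ (Fin.castAdd p j) : ℕ) = j + conjP β (m - 1 - j)) ∧
      (∀ k : Fin p, (τ (Fin.natAdd m k) : ℕ) = m + k - β k) ∧
      Equiv.Perm.sign τ = (-1) ^ ∑ k : Fin p, β k := by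
  have hβm (k : ℕ) : β k ≤ m := (hβ k.zero_le).trans hm
  let left (j : Fin m) : Fin (m + p) :=
    ⟨j + conjP β (m - 1 - j), by have := conjP_le hβ hp (m - 1 - j); lia⟩
  let right (k : Fin p) : Fin (m + p) := ⟨m + k - β k, by lia⟩
  have hleft : StrictMono left := by
    intro j j' hj
    have := antitone_conjP hβ hp (show m - 1 - (j' : ℕ) ≤ m - 1 - j by lia)
    simp only [left, Fin.mk_lt_mk]
    lia
  have hright : StrictMono right := by
    intro k k' hk
    have := hβ (show (k : ℕ) ≤ k' from hk.le)
    have := hβm k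
    simp only [right, Fin.mk_lt_mk]
    lia
  have hdisjoint (j : Fin m) (k : Fin p) : left j ≠ right k := by
    have := lt_conjP_iff hβ hp (m := m - 1 - j) (l := k)
    have := hβm k
    simp only [left, right, ne_eq, Fin.mk.injEq]
    lia
  obtain ⟨τ, hτleft, hτright, hsign⟩ := exists_perm_of_strictMono_blocks hleft hright hdisjoint
  refine ⟨τ, fun j ↦ congrArg Fin.val (hτleft j), fun k ↦ congrArg Fin.val (hτright k), ?_⟩
  rw [hsign]
  congr 1
  refine sum_congr rfl fun k _ ↦ ?_
  have := hβm k
  simp only [right]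
  lia

variable {R : Type*} [CommRing R] {m p : ℕ}

/-- The Vandermonde-type matrix with rows `z_a^(N-1), …, z_a, 1`. -/
def descPowMatrix (z : Fin p → R) (N : ℕ) : Matrix (Fin p) (Fin N) R :=
  .of fun a q ↦ z a ^ (N - 1 - (q : ℕ))

/-- The lower triangular Toeplitz matrix of the coefficients of `f`. -/
noncomputable def toeplitzMatrix (f : PowerSeries R) (N m : ℕ) : Matrix (Fin N) (Fin m) R :=
  .of fun q i ↦ intCoeff f ((q : ℕ) - (i : ℕ))

lemma det_descPowMatrix_submatrix (z : Fin p → R) {N : ℕ} {g : Fin p → Fin N} {ν : ℕ → ℕ}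
    (hg : ∀ k, N - 1 - (g k : ℕ) = ν k + (p - 1 - k)) :
    ((descPowMatrix z N).submatrix id g).det = alternant z ν := by
  rw [alternant]
  congr 1
  ext a k
  simp only [Matrix.submatrix_apply, descPowMatrix, Matrix.of_apply, hg, id_eq]

-- Reversing the order of both rows and columns turns row `g j` into row `m - 1 - j` of the
-- Jacobi–Trudi matrix.
lemma det_toeplitzMatrix_submatrix (f : PowerSeries R) {N : ℕ} {g : Fin m → Fin N} {μ : ℕ → ℕ}
    (hg : ∀ j, (g j : ℕ) = j + μ (m - 1 - j)) :
    ((toeplitzMatrix f N m).submatrix g id).det = jacobiTrudi f μ m := by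
  rw [jacobiTrudi, ← Matrix.det_submatrix_equiv_self Fin.revPerm]
  congr 1
  ext j i
  have hj := j.isLt
  have hi := i.isLt
  simp only [Matrix.submatrix_apply, toeplitzMatrix, Matrix.of_apply, hg, id_eq, Fin.revPerm_apply,
    Fin.val_rev]
  rw [show m - 1 - (m - (j + 1)) = (j : ℕ) by lia]
  congr 1
  lia

-- The entries are coefficients of `∏_b (1 + y_b t) / (1 + y_a t)`, a polynomial of degree `p - 1`,
-- in degrees at least `p`.
lemma descPowMatrix_mul_toeplitzMatrix (y : Fin p → R) :
    descPowMatrix (-y) (m + p) * toeplitzMatrix (elemSeries y univ) (m + p) m = 0 := by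
  ext a i
  have hi := i.isLt
  have hpow (q : Fin (m + p)) : (-y a) ^ (m + p - 1 - (q : ℕ))
      = intCoeff (geomSeries (-y a)) ((m + p : ℕ) - 1 - (q : ℕ)) := by
    have hq := q.isLt
    rw [show ((m + p : ℕ) - 1 - (q : ℕ) : ℤ) = (m + p - 1 - q : ℕ) by lia, intCoeff_natCast,
      geomSeries, PowerSeries.coeff_mk]
  have hdegree : (-(i : ℕ) + ((m + p : ℕ) - 1) : ℤ)
      = (#(univ : Finset (Fin p)) + (m - 1 - i) : ℕ) := by
    rw [card_fin]
    lia
  calc ∑ q : Fin (m + p), (-y a) ^ (m + p - 1 - (q : ℕ))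
          * intCoeff (elemSeries y univ) ((q : ℕ) - (i : ℕ))
    _ = ∑ q : Fin (m + p), intCoeff (elemSeries y univ) (-(i : ℕ) + (q : ℕ))
          * intCoeff (geomSeries (-y a)) ((m + p : ℕ) - 1 - (q : ℕ)) :=
      sum_congr rfl fun q _ ↦ by rw [hpow, mul_comm, neg_add_eq_sub]
    _ = intCoeff (elemSeries y univ * geomSeries (-y a)) (-(i : ℕ) + ((m + p : ℕ) - 1)) :=
      sum_intCoeff_mul_intCoeff _ _ (by lia) fun l hl ↦ by
        rw [intCoeff_of_neg _ (by lia), zero_mul]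
    _ = 0 := by
      rw [hdegree, intCoeff_natCast, coeff_elemSeries_mul_geomSeries,
        prod_eq_zero (mem_univ a) (add_neg_cancel (y a)), mul_zero]

lemma jacobiTrudi_conjP_mul_alternant_zero (y : Fin p → R) {β : ℕ → ℕ} (hβ : Antitone β)
    (hp : ∀ k, p ≤ k → β k = 0) (hm : β 0 ≤ m) :
    jacobiTrudi (elemSeries y univ) (conjP β) m * alternant y 0 = alternant y β := by
  obtain ⟨τ, hτleft, hτright, hsign⟩ := exists_perm_of_conjP hβ hp hm
  let S := ∑ k : Fin p, β k
  have hAbase : ((descPowMatrix (-y) (m + p)).submatrix id (Fin.natAdd m)).det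
      = alternant (-y) 0 :=
    det_descPowMatrix_submatrix (-y) fun k ↦ by
      rw [Fin.val_natAdd, Pi.zero_apply]
      lia
  have hAτ : ((descPowMatrix (-y) (m + p)).submatrix id (τ ∘ Fin.natAdd m)).det
      = alternant (-y) β :=
    det_descPowMatrix_submatrix (-y) fun k ↦ by
      have hβk := (hβ (Nat.zero_le k)).trans hm
      rw [Function.comp_apply, hτright]
      lia
  let T := toeplitzMatrix (elemSeries y univ) (m + p) m
  have hTbase : (T.submatrix (Fin.castAdd p) id).det = 1 := by
    rw [det_toeplitzMatrix_submatrix _ (μ := 0) fun j ↦ by simp, jacobiTrudi_zero,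
      constantCoeff_elemSeries, one_pow]
  have hTτ : (T.submatrix (τ ∘ Fin.castAdd p) id).det
      = jacobiTrudi (elemSeries y univ) (conjP β) m :=
    det_toeplitzMatrix_submatrix _ hτleft
  have hminors := sign_mul_det_mul_det_of_mul_eq_zero (descPowMatrix_mul_toeplitzMatrix y)
    finSumFinEquiv τ
  have hinl : (finSumFinEquiv ∘ Sum.inl : Fin m → Fin (m + p)) = Fin.castAdd p := rfl
  have hinr : (finSumFinEquiv ∘ Sum.inr : Fin p → Fin (m + p)) = Fin.natAdd m := rfl
  rw [hinl, hinr, hAbase, hAτ, hTbase, hTτ, hsign] at hminors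
  push_cast at hminors
  have hneg : (-1) ^ S * jacobiTrudi (elemSeries y univ) (conjP β) m * alternant (-y) 0
      = 1 * alternant (-y) β := by
    rw [← hminors]
    ring
  refine (isUnit_neg_one.pow S).mul_left_cancel ?_
  rw [← mul_assoc, mul_alternant_zero_of_neg hneg, mul_one]

end DualJacobiTrudi

lemma jacobiTrudi_conjP_gluePartition {R : Type*} [CommRing R] {n p : ℕ} {x : Fin n → R}
    {y : Fin p → R} {f : PowerSeries R} (hf : f * elemSeries x univ = elemSeries y univ)
    {α β : ℕ → ℕ} (hα : Antitone α) (hβ : Antitone β) (hαn : α 0 ≤ n)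
    (hβp : ∀ k, p ≤ k → β k = 0) {N : ℕ} (hαN : ∀ k, N ≤ k → α k = 0) :
    jacobiTrudi f (conjP (gluePartition n p α β)) (n + β 0) * (alternant x 0 * alternant y 0)
      = (-1) ^ (∑ l ∈ range N, α l) * (∏ a, ∏ b, (y b - x a))
        * (alternant x (conjP α) * alternant y β) := by
  have hrows (k : ℕ) (hk : k < n) : conjP (gluePartition n p α β) k
      = #(univ : Finset (Fin p)) + conjP α k := by
    rw [conjP_gluePartition_of_lt hα hαN hk, card_fin]
  have hsplit : jacobiTrudi f (conjP (gluePartition n p α β)) (n + β 0)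
      = jacobiTrudi f (conjP (gluePartition n p α β)) n
        * jacobiTrudi (elemSeries y univ) (conjP β) (β 0) := by
    have := jacobiTrudi_add hf (μ := conjP (gluePartition n p α β))
      (fun k hk ↦ by rw [hrows k (by simpa using hk)]; lia) (β 0)
    simpa only [card_fin,
      conjP_gluePartition_add (fun l ↦ (hα l.zero_le).trans hαn) hβ hβp] using this
  rw [hsplit, mul_mul_mul_comm, jacobiTrudi_mul_alternant_zero x y hf hrows,
    jacobiTrudi_conjP_mul_alternant_zero y hβ hβp le_rfl, sum_conjP hα hαN hαn, mul_assoc]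

section SupersymmetricSchur

variable (n p : ℕ)

/-- The generating series of the `c_d`. -/
noncomputable def cSeries : PowerSeries (MvPolynomial (Fin n ⊕ Fin p) ℤ) :=
  PowerSeries.mk (cpoly n p)

lemma superSchur_eq_jacobiTrudi (lam : ℕ → ℕ) :
    superSchur n p lam = jacobiTrudi (cSeries n p) (conjP lam) (lam 0) := by
  simp only [superSchur, jacobiTrudi, cInt, intCoeff, cSeries, PowerSeries.coeff_mk]

lemma coeff_prod_geomSeries_neg_X (d : ℕ) :
    PowerSeries.coeff d (∏ k, geomSeries (-X (Sum.inl k) : MvPolynomial (Fin n ⊕ Fin p) ℤ))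
      = (-1) ^ d * hsymX n p d := by
  rw [coeff_prod_geomSeries, hsymX, mul_sum]
  refine sum_congr rfl fun g hg ↦ ?_
  simp only [neg_pow (X _ : MvPolynomial (Fin n ⊕ Fin p) ℤ), prod_mul_distrib, prod_pow_eq_pow_sum,
    Finset.Nat.mem_antidiagonalTuple.1 hg]

lemma cSeries_eq_prod_geomSeries_mul_elemSeries : cSeries n p
    = (∏ k, geomSeries (-X (Sum.inl k))) * elemSeries (fun b ↦ X (Sum.inr b)) univ := by
  ext1 d
  rw [PowerSeries.coeff_mul, Nat.sum_antidiagonal_eq_sum_range_succ_mk, cSeries,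
    PowerSeries.coeff_mk, cpoly]
  simp only [coeff_prod_geomSeries_neg_X, coeff_elemSeries, esymY]

lemma cSeries_mul_elemSeries :
    cSeries n p * elemSeries (fun a ↦ X (Sum.inl a)) univ
      = elemSeries (fun b ↦ X (Sum.inr b)) univ := by
  rw [cSeries_eq_prod_geomSeries_mul_elemSeries, mul_right_comm, mul_comm (∏ _, _),
    elemSeries_mul_prod_geomSeries_neg, one_mul]

end SupersymmetricSchur

lemma rename_mul_alternant_zero {n : ℕ} {σ : Type*} (g : Fin n → σ) {S : MvPolynomial (Fin n) ℤ}
    {ν : ℕ → ℕ} (hS : S * alternant X 0 = alternant X ν) :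
    rename g S * alternant (fun a ↦ X (g a)) 0 = alternant (fun a ↦ X (g a)) ν := by
  have h := congrArg (rename g : MvPolynomial (Fin n) ℤ →ₐ[ℤ] MvPolynomial σ ℤ).toRingHom hS
  rw [map_mul, map_alternant, map_alternant] at h
  simpa [Function.comp_def] using h

theorem factorization_formula (n p : ℕ) (hn : 1 ≤ n) (hp : 1 ≤ p)
    (alpha beta : ℕ → ℕ)
    (halpha : Antitone alpha) (hbeta : Antitone beta)
    (halpha1 : alpha 0 ≤ n) (hbetalen : ∀ k, p ≤ k → beta k = 0)
    (N : ℕ) (halphaN : ∀ k, N ≤ k → alpha k = 0)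
    (Sx : (ℕ → ℕ) → MvPolynomial (Fin n) ℤ)
    (Sy : (ℕ → ℕ) → MvPolynomial (Fin p) ℤ)
    -- bialternant characterization of the Schur polynomials in the x-variables:
    (hSx : ∀ nu : ℕ → ℕ, Antitone nu → (∀ k, n ≤ k → nu k = 0) →
      Sx nu * ∏ q ∈ Finset.univ.filter (fun q : Fin n × Fin n => q.1 < q.2),
          (X q.1 - X q.2)
        = (Matrix.of fun a b : Fin n =>
            (X a : MvPolynomial (Fin n) ℤ) ^ (nu (b : ℕ) + (n - 1 - (b : ℕ)))).det)
    -- bialternant characterization of the Schur polynomials in the y-variables: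
    (hSy : ∀ nu : ℕ → ℕ, Antitone nu → (∀ k, p ≤ k → nu k = 0) →
      Sy nu * ∏ q ∈ Finset.univ.filter (fun q : Fin p × Fin p => q.1 < q.2),
          (X q.1 - X q.2)
        = (Matrix.of fun a b : Fin p =>
            (X a : MvPolynomial (Fin p) ℤ) ^ (nu (b : ℕ) + (p - 1 - (b : ℕ)))).det) :
    superSchur n p (fun l => if l < p then n + beta l else alpha (l - p))
      = (-1 : MvPolynomial (Fin n ⊕ Fin p) ℤ) ^ (∑ l ∈ Finset.range N, alpha l)
        * (∏ a : Fin n, ∏ b : Fin p, (X (Sum.inr b) - X (Sum.inl a)))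
        * rename Sum.inl (Sx (conjP alpha))
        * rename Sum.inr (Sy beta) := by
  have hx : Sx (conjP alpha) * alternant X 0 = alternant X (conjP alpha) := by
    rw [alternant_zero]
    exact hSx _ (antitone_conjP halpha halphaN) fun k hk ↦
      conjP_eq_zero halpha (halpha1.trans hk)
  have hy : Sy beta * alternant X 0 = alternant X beta := by
    rw [alternant_zero]
    exact hSy beta hbeta hbetalen
  have hfirst : gluePartition n p alpha beta 0 = n + beta 0 := if_pos hp
  have hX : alternant (fun a : Fin n ↦ (X (Sum.inl a) : MvPolynomial (Fin n ⊕ Fin p) ℤ)) 0 ≠ 0 :=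
    alternant_zero_ne_zero (X_injective.comp Sum.inl_injective)
  have hY : alternant (fun b : Fin p ↦ (X (Sum.inr b) : MvPolynomial (Fin n ⊕ Fin p) ℤ)) 0 ≠ 0 :=
    alternant_zero_ne_zero (X_injective.comp Sum.inr_injective)
  change superSchur n p (gluePartition n p alpha beta) = _
  refine mul_right_cancel₀ (mul_ne_zero hX hY) ?_
  rw [superSchur_eq_jacobiTrudi, hfirst, jacobiTrudi_conjP_gluePartition
    (cSeries_mul_elemSeries n p) halpha hbeta halpha1 hbetalen halphaN,
    ← rename_mul_alternant_zero Sum.inl hx, ← rename_mul_alternant_zero Sum.inr hy]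
  ring
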